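/- For any discrete memoryless channel W: X → Y on finite alphabets, the order-0 reliability function satisfies E_rf^{(0)}(W,r) = ∞ for every r > I_0(W), and E_rf^{(0)}(W,r) = 0 for every r with 0 ≤ r < I_0(W). -/

import Mathlib

open scoped ENNReal NNReal BigOperators Classical
open Filter

noncomputable section

namespace RST

/-- Base-2 logarithm `ℝ≥0∞ → EReal`, with `log 0 = ⊥` and `log ⊤ = ⊤`. -/
def elog2 (s : ℝ≥0∞) : EReal :=
  if s = 0 then ⊥ else if s = ⊤ then ⊤ else ((Real.logb 2 s.toReal : ℝ) : EReal)

/-- Base-2 logarithm `EReal → EReal` (for nonnegative arguments). -/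
def eLog2 (x : EReal) : EReal :=
  if x = ⊤ then ⊤ else if x ≤ 0 then ⊥ else ((Real.logb 2 x.toReal : ℝ) : EReal)

/-- Base-2 exponential `EReal → ℝ≥0∞`. -/
def epow2 (x : EReal) : ℝ≥0∞ :=
  if x = ⊤ then ⊤ else if x = ⊥ then 0 else ENNReal.ofReal ((2 : ℝ) ^ x.toReal)

variable {X Y : Type*}

/-- A probability distribution on a finite alphabet, as an `ℝ≥0∞`-valued function. -/
def IsDist [Fintype X] (P : X → ℝ≥0∞) : Prop := ∑ x, P x = 1

/-- A discrete memoryless channel: every row is a probability distribution. -/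
def IsChannel [Fintype X] [Fintype Y] (W : X → Y → ℝ≥0∞) : Prop := ∀ x, ∑ y, W x y = 1

/-- Order-`α` Rényi divergence (base 2), with the order `α ∈ [0,∞]` encoded as `ℝ≥0∞`.
The conventions `0/0 = 0` and `a/0 = ∞` (for `a > 0`, `α > 1`) are built into `ℝ≥0∞`
arithmetic.  The second argument is allowed to be an arbitrary nonnegative vector. -/
def renyiD [Fintype X] (α : ℝ≥0∞) (P Q : X → ℝ≥0∞) : EReal :=
  if α = 0 then - elog2 (∑ x ∈ Finset.univ.filter fun x => P x ≠ 0, Q x)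
  else if α = 1 then ∑ x, ((P x).toReal : EReal) * elog2 (P x / Q x)
  else if α = ⊤ then elog2 (⨆ x, P x / Q x)
  else (((α.toReal - 1)⁻¹ : ℝ) : EReal) *
    elog2 (∑ x, P x ^ α.toReal * Q x ^ (1 - α.toReal))

/-- The `X`-marginal of a joint distribution on `X × Y`. -/
def margX [Fintype X] [Fintype Y] (P : X × Y → ℝ≥0∞) : X → ℝ≥0∞ := fun x => ∑ y, P (x, y)

/-- Order-`α` Rényi mutual information `I_α(X:Y)_P = min_{Q_Y} D_α(P‖P_X × Q_Y)`. -/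
def renyiMI [Fintype X] [Fintype Y] (α : ℝ≥0∞) (P : X × Y → ℝ≥0∞) : EReal :=
  ⨅ Q : {Q : Y → ℝ≥0∞ // IsDist Q}, renyiD α P fun p => margX P p.1 * Q.1 p.2

/-- The joint input-output distribution `P_X · W`. -/
def joint [Fintype X] [Fintype Y] (PX : X → ℝ≥0∞) (W : X → Y → ℝ≥0∞) : X × Y → ℝ≥0∞ :=
  fun p => PX p.1 * W p.1 p.2

/-- Order-`α` Rényi capacity `I_α(W) = max_{P_X} I_α(X:Y)_{P_X · W}`. -/
def renyiCap [Fintype X] [Fintype Y] (α : ℝ≥0∞) (W : X → Y → ℝ≥0∞) : EReal :=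
  ⨆ P : {P : X → ℝ≥0∞ // IsDist P}, renyiMI α (joint P.1 W)

/-- `N` is a simulation of a channel `X → Y` with communication cost at most `c` bits:
shared randomness `K = Fin m` with distribution `PK`, a message set `{1,…,M}` with
`log₂ M ≤ c`, an encoder `E` and a decoder `D`. -/
def IsSimulation [Fintype X] [Fintype Y] (c : ℝ) (N : X → Y → ℝ≥0∞) : Prop :=
  ∃ (m M : ℕ) (PK : Fin m → ℝ≥0∞) (E : X → Fin m → Fin M → ℝ≥0∞)
    (D : Fin M → Fin m → Y → ℝ≥0∞),
    0 < M ∧ Real.logb 2 M ≤ c ∧ (∑ k, PK k = 1) ∧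
    (∀ x k, ∑ j, E x k j = 1) ∧ (∀ j k, ∑ y, D j k y = 1) ∧
    ∀ x y, N x y = ∑ k, ∑ j, PK k * E x k j * D j k y

/-- `D_α(W, N) := max_x D_α(W(·|x) ‖ N(·|x))`. -/
def chD [Fintype X] [Fintype Y] (α : ℝ≥0∞) (W N : X → Y → ℝ≥0∞) : EReal :=
  ⨆ x, renyiD α (W x) (N x)

/-- `𝖣_α(W, c) := min_{N ∈ A(W,c)} D_α(W, N)`. -/
def simD [Fintype X] [Fintype Y] (α : ℝ≥0∞) (W : X → Y → ℝ≥0∞) (c : ℝ) : EReal :=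
  ⨅ N : {N : X → Y → ℝ≥0∞ // IsSimulation c N}, chD α W N.1

/-- The `n`-fold memoryless extension `W^{×n}` of a channel `W`. -/
def prodCh [Fintype X] [Fintype Y] (n : ℕ) (W : X → Y → ℝ≥0∞) :
    (Fin n → X) → (Fin n → Y) → ℝ≥0∞ :=
  fun xs ys => ∏ i, W (xs i) (ys i)

/-- A sequence of communication costs with rate at most `r`. -/
def RateOK (r : ℝ) (c : ℕ → ℝ) : Prop :=
  (∀ n, 0 ≤ c n) ∧ Filter.limsup (fun n : ℕ => ((c n / n : ℝ) : EReal)) Filter.atTop ≤ (r : EReal)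

/-- Reliability function `E_rf^{(α)}(W, r)`. -/
def Erf [Fintype X] [Fintype Y] (α : ℝ≥0∞) (W : X → Y → ℝ≥0∞) (r : ℝ) : EReal :=
  ⨆ c : {c : ℕ → ℝ // RateOK r c},
    Filter.liminf
      (fun n : ℕ => (((-1 : ℝ) / n : ℝ) : EReal) * eLog2 (simD α (prodCh n W) (c.1 n)))
      Filter.atTop

/-- Strong converse exponent `E_sc^{(α)}(W, r)`. -/
def Esc [Fintype X] [Fintype Y] (α : ℝ≥0∞) (W : X → Y → ℝ≥0∞) (r : ℝ) : EReal :=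
  ⨅ c : {c : ℕ → ℝ // RateOK r c},
    Filter.limsup
      (fun n : ℕ => (((1 : ℝ) / n : ℝ) : EReal) * simD α (prodCh n W) (c.1 n))
      Filter.atTop

/-- The `α`-Rényi simulation rate `R_RST^{(α)}(W)`. -/
def Rrst [Fintype X] [Fintype Y] (α : ℝ≥0∞) (W : X → Y → ℝ≥0∞) : EReal :=
  ⨅ c : {c : ℕ → ℝ // (∀ n, 0 ≤ c n) ∧
      Filter.limsup (fun n : ℕ => simD α (prodCh n W) (c n)) Filter.atTop = 0},
    Filter.limsup (fun n : ℕ => ((c.1 n / n : ℝ) : EReal)) Filter.atTop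

/-- n-fold product of a joint distribution on `X × Y`, as a distribution on pairs of
sequences. -/
def prodJoint [Fintype X] [Fintype Y] (n : ℕ) (P : X × Y → ℝ≥0∞) :
    (Fin n → X) × (Fin n → Y) → ℝ≥0∞ :=
  fun p => ∏ i, P (p.1 i, p.2 i)

/-- n-fold product distribution. -/
def prodDist [Fintype X] (n : ℕ) (P : X → ℝ≥0∞) : (Fin n → X) → ℝ≥0∞ :=
  fun xs => ∏ i, P (xs i)

/-- The type (empirical count vector) of a sequence. -/
def seqType [Fintype Y] [DecidableEq Y] {n : ℕ} (ys : Fin n → Y) : Y → ℕ :=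
  fun y => (Finset.univ.filter fun i => ys i = y).card

/-- The cardinality of the type class of a sequence. -/
def typeClassCard [Fintype Y] [DecidableEq Y] {n : ℕ} (ys : Fin n → Y) : ℕ :=
  (Finset.univ.filter fun zs : Fin n → Y => seqType zs = seqType ys).card

/-- The number of types of sequences in `Y^n`. -/
def numTypes (Y : Type*) [Fintype Y] [DecidableEq Y] (n : ℕ) : ℕ :=
  (Finset.univ.image fun ys : Fin n → Y => seqType ys).card

/-- `Φ_{Y^n}`: the uniform mixture over type classes of `Y^n`. -/
def PhiY (Y : Type*) [Fintype Y] [DecidableEq Y] (n : ℕ) : (Fin n → Y) → ℝ≥0∞ :=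
  fun ys => ((numTypes Y n : ℝ≥0∞) * (typeClassCard ys : ℝ≥0∞))⁻¹

end RST
namespace RST

lemma elog2_le_iff (s : ℝ≥0∞) (b : ℝ) :
    elog2 s ≤ (b : EReal) ↔ s ≤ ENNReal.ofReal ((2 : ℝ) ^ b) := by
  unfold elog2
  split_ifs with h0 h1
  · simp [h0]
  · simp [h1]
  · have hp : 0 < s.toReal := ENNReal.toReal_pos h0 h1
    rw [EReal.coe_le_coe_iff, Real.logb_le_iff_le_rpow (by norm_num) hp,
      ENNReal.le_ofReal_iff_toReal_le h1 (by positivity)]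

lemma le_elog2_iff (s : ℝ≥0∞) (b : ℝ) :
    (b : EReal) ≤ elog2 s ↔ ENNReal.ofReal ((2 : ℝ) ^ b) ≤ s := by
  unfold elog2
  split_ifs with h0 h1
  · simp only [h0, le_bot_iff, EReal.coe_ne_bot, false_iff, nonpos_iff_eq_zero,
      ENNReal.ofReal_eq_zero, not_le]
    positivity
  · simp [h1]
  · have hp : 0 < s.toReal := ENNReal.toReal_pos h0 h1
    rw [EReal.coe_le_coe_iff, Real.le_logb_iff_rpow_le (by norm_num) hp,
      ENNReal.ofReal_le_iff_le_toReal h1]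

lemma neg_elog2_le_iff (s : ℝ≥0∞) (b : ℝ) :
    -elog2 s ≤ (b : EReal) ↔ ENNReal.ofReal ((2 : ℝ) ^ (-b)) ≤ s := by
  rw [← le_elog2_iff, EReal.neg_le, EReal.coe_neg]

lemma le_neg_elog2_iff (s : ℝ≥0∞) (b : ℝ) :
    (b : EReal) ≤ -elog2 s ↔ s ≤ ENNReal.ofReal ((2 : ℝ) ^ (-b)) := by
  rw [← elog2_le_iff, EReal.le_neg, EReal.coe_neg]

lemma neg_mul_le (a b : ℝ) (ha : a < 0) (z : EReal) (h : (b : EReal) ≤ z) :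
    (a : EReal) * z ≤ ((a * b : ℝ) : EReal) := by
  induction z with
  | bot => simp at h
  | top => rw [EReal.coe_mul_top_of_neg ha]; exact bot_le
  | coe z =>
    rw [← EReal.coe_mul, EReal.coe_le_coe_iff]
    rw [EReal.coe_le_coe_iff] at h
    nlinarith

lemma le_neg_mul (a b : ℝ) (ha : a < 0) (z : EReal) (h : z ≤ (b : EReal)) :
    ((a * b : ℝ) : EReal) ≤ (a : EReal) * z := by
  induction z with
  | bot => rw [EReal.coe_mul_bot_of_neg ha]; exact le_top
  | top => simp at h
  | coe z =>
    rw [← EReal.coe_mul, EReal.coe_le_coe_iff]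
    rw [EReal.coe_le_coe_iff] at h
    nlinarith

lemma eLog2_le (x : EReal) (b : ℝ) (h : x ≤ (b : EReal)) :
    eLog2 x ≤ ((Real.logb 2 b : ℝ) : EReal) := by
  unfold eLog2
  induction x with
  | bot => simp
  | top => simp at h
  | coe x =>
    rw [EReal.coe_le_coe_iff] at h
    split_ifs with h1 h2
    · simp at h1
    · exact bot_le
    · have : 0 < x := by simpa using h2
      rw [EReal.coe_le_coe_iff, EReal.toReal_coe]
      exact Real.logb_le_logb_of_le (by norm_num) this h

lemma le_eLog2_one (x : EReal) (h : (1 : EReal) ≤ x) : 0 ≤ eLog2 x := by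
  unfold eLog2
  induction x with
  | bot => exact absurd (le_bot_iff.1 h) (by decide)
  | top => simp
  | coe x =>
    have h' : 1 ≤ x := by exact_mod_cast h
    split_ifs with h1 h2
    · simp
    · have : x ≤ 0 := by exact_mod_cast h2
      linarith
    · rw [EReal.toReal_coe]
      exact_mod_cast Real.logb_nonneg (by norm_num) h'

/-- Mass of inputs which are compatible with the output `y`. -/
def cov {A B : Type*} [Fintype A] (W : A → B → ℝ≥0∞) (P : A → ℝ≥0∞) (y : B) : ℝ≥0∞ :=
  ∑ x, if W x y ≠ 0 then P x else 0

lemma renyiD_joint {X Y : Type*} [Fintype X] [Fintype Y] (W : X → Y → ℝ≥0∞)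
    (hW : IsChannel W) (P : X → ℝ≥0∞) (Q : Y → ℝ≥0∞) :
    renyiD 0 (joint P W) (fun p => margX (joint P W) p.1 * Q p.2) =
      - elog2 (∑ y, Q y * cov W P y) := by
  have hm : ∀ x, margX (joint P W) x = P x := by
    intro x
    simp only [margX, joint]
    rw [← Finset.mul_sum, hW x, mul_one]
  unfold renyiD
  rw [if_pos rfl]
  congr 2
  rw [Finset.sum_filter, Fintype.sum_prod_type_right]
  refine Finset.sum_congr rfl fun y _ => ?_
  rw [cov, Finset.mul_sum]
  refine Finset.sum_congr rfl fun x _ => ?_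
  simp only [hm, joint]
  by_cases h1 : P x = 0
  · simp [h1]
  · by_cases h2 : W x y = 0
    · simp [h2]
    · simp [h1, h2, mul_comm]

lemma cov_of_cap_lt {X Y : Type*} [Fintype X] [Fintype Y] [Nonempty Y] (W : X → Y → ℝ≥0∞)
    (hW : IsChannel W) (r : ℝ) (h : renyiCap 0 W < (r : EReal)) (P : X → ℝ≥0∞)
    (hP : IsDist P) : ∃ y, ENNReal.ofReal ((2 : ℝ) ^ (-r)) ≤ cov W P y := by
  have h1 : renyiMI 0 (joint P W) < (r : EReal) :=
    lt_of_le_of_lt (le_iSup (fun P : {P : X → ℝ≥0∞ // IsDist P} => renyiMI 0 (joint P.1 W))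
      ⟨P, hP⟩) h
  obtain ⟨⟨Q, hQ⟩, h2⟩ := iInf_lt_iff.1 h1
  rw [renyiD_joint W hW] at h2
  have h3 := (neg_elog2_le_iff _ _).1 h2.le
  obtain ⟨y, hy⟩ := Finite.exists_max (cov W P)
  refine ⟨y, h3.trans ?_⟩
  calc ∑ z, Q z * cov W P z ≤ ∑ z, Q z * cov W P y :=
        Finset.sum_le_sum fun z _ => mul_le_mul_right (hy z) _
    _ = cov W P y := by rw [← Finset.sum_mul, hQ, one_mul]

lemma cov_of_lt_cap {X Y : Type*} [Fintype X] [Fintype Y] (W : X → Y → ℝ≥0∞)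
    (hW : IsChannel W) (r : ℝ) (h : (r : EReal) < renyiCap 0 W) :
    ∃ P : X → ℝ≥0∞, IsDist P ∧ ∀ y, cov W P y ≤ ENNReal.ofReal ((2 : ℝ) ^ (-r)) := by
  obtain ⟨⟨P, hP⟩, h1⟩ := lt_iSup_iff.1 h
  refine ⟨P, hP, fun y => ?_⟩
  have hd : IsDist (fun z : Y => if z = y then (1 : ℝ≥0∞) else 0) := by
    simp [IsDist]
  have h2 := h1.le.trans (iInf_le _ ⟨_, hd⟩)
  rw [renyiD_joint W hW, le_neg_elog2_iff] at h2
  simpa using h2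

lemma prodCh_ne_zero {X Y : Type*} [Fintype X] [Fintype Y] (W : X → Y → ℝ≥0∞) (n : ℕ)
    (x : Fin n → X) (y : Fin n → Y) : prodCh n W x y ≠ 0 ↔ ∀ i, W (x i) (y i) ≠ 0 := by
  simp [prodCh, Finset.prod_ne_zero_iff]

lemma cov_prod {X Y : Type*} [Fintype X] [Fintype Y] (W : X → Y → ℝ≥0∞) (n : ℕ)
    (P : X → ℝ≥0∞) (y : Fin n → Y) :
    cov (prodCh n W) (prodDist n P) y = ∏ i, cov W P (y i) := by
  simp only [cov]
  rw [Finset.prod_univ_sum, Fintype.piFinset_univ]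
  refine Finset.sum_congr rfl fun x _ => ?_
  rw [prodDist, Finset.prod_ite_zero]
  simp [prodCh_ne_zero]

lemma isDist_prod {X : Type*} [Fintype X] (n : ℕ) (P : X → ℝ≥0∞) (hP : IsDist P) :
    IsDist (prodDist n P) := by
  have := Finset.prod_univ_sum (fun _ : Fin n => (Finset.univ : Finset X)) (fun _ x => P x)
  rw [Fintype.piFinset_univ] at this
  simp only [IsDist, prodDist] at *
  rw [← this, hP]; simp

lemma converse {A B : Type*} [Fintype A] [Fintype B] (V : A → B → ℝ≥0∞) (P : A → ℝ≥0∞)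
    (hP : IsDist P) (d c : ℝ) (hv : ∀ y, cov V P y ≤ ENNReal.ofReal ((2 : ℝ) ^ (-d))) :
    ((d - c : ℝ) : EReal) ≤ simD 0 V c := by
  refine le_iInf fun ⟨N, m, M, PK, E, D, hM, hMc, hPK, hE, hD, hN⟩ => ?_
  by_contra! hlt
  obtain ⟨d', h1, h2⟩ := EReal.lt_iff_exists_real_btwn.1 hlt
  rw [EReal.coe_lt_coe_iff] at h2
  have hs : ∀ x, ENNReal.ofReal ((2 : ℝ) ^ (-d')) ≤ ∑ y, if V x y ≠ 0 then N x y else 0 := by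
    intro x
    have := (le_iSup (fun x => renyiD 0 (V x) (N x)) x).trans h1.le
    simp only [renyiD, if_true] at this
    rw [neg_elog2_le_iff, Finset.sum_filter] at this
    exact this
  have hE1 : ∀ x k j, E x k j ≤ 1 := fun x k j =>
    (hE x k) ▸ Finset.single_le_sum (f := E x k) (fun _ _ => zero_le) (Finset.mem_univ j)
  have hNle : ∀ x y, N x y ≤ ∑ k, ∑ j, PK k * D j k y := by
    intro x y
    rw [hN]
    refine Finset.sum_le_sum fun k _ => Finset.sum_le_sum fun j _ => ?_
    calc PK k * E x k j * D j k y ≤ PK k * 1 * D j k y := by gcongr; exact hE1 x k j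
      _ = _ := by rw [mul_one]
  have hM2 : (M : ℝ≥0∞) ≤ ENNReal.ofReal ((2 : ℝ) ^ c) := by
    rw [← ENNReal.ofReal_natCast]
    refine ENNReal.ofReal_le_ofReal ?_
    exact (Real.logb_le_iff_le_rpow (by norm_num) (by exact_mod_cast hM)).1 hMc
  have key : ENNReal.ofReal ((2 : ℝ) ^ (-d')) ≤ ENNReal.ofReal ((2 : ℝ) ^ (c - d)) := by
    calc ENNReal.ofReal ((2 : ℝ) ^ (-d'))
        = ∑ x, P x * ENNReal.ofReal ((2 : ℝ) ^ (-d')) := by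
          rw [← Finset.sum_mul, hP, one_mul]
      _ ≤ ∑ x, P x * ∑ y, if V x y ≠ 0 then (∑ k, ∑ j, PK k * D j k y) else 0 := by
          refine Finset.sum_le_sum fun x _ => mul_le_mul_right ((hs x).trans ?_) _
          refine Finset.sum_le_sum fun y _ => ?_
          split_ifs
          · exact hNle x y
          · exact le_rfl
      _ = ∑ y, (∑ k, ∑ j, PK k * D j k y) * cov V P y := by
          simp_rw [cov, Finset.mul_sum (s := (Finset.univ : Finset A)),
            Finset.mul_sum (s := (Finset.univ : Finset B))]
          rw [Finset.sum_comm]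
          refine Finset.sum_congr rfl fun y _ => Finset.sum_congr rfl fun x _ => ?_
          split_ifs
          · rw [mul_comm]
          · simp
      _ ≤ ∑ y, (∑ k, ∑ j, PK k * D j k y) * ENNReal.ofReal ((2 : ℝ) ^ (-d)) :=
          Finset.sum_le_sum fun y _ => mul_le_mul_right (hv y) _
      _ = M * ENNReal.ofReal ((2 : ℝ) ^ (-d)) := by
          rw [← Finset.sum_mul]
          congr 1
          rw [Finset.sum_comm]
          have : ∀ k, ∑ y, ∑ j, PK k * D j k y = M * PK k := by
            intro k
            rw [Finset.sum_comm]
            simp_rw [← Finset.mul_sum, hD]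
            simp [mul_comm]
          simp_rw [this, ← Finset.mul_sum, hPK, mul_one]
      _ ≤ ENNReal.ofReal ((2 : ℝ) ^ c) * ENNReal.ofReal ((2 : ℝ) ^ (-d)) := by gcongr
      _ = _ := by
          rw [← ENNReal.ofReal_mul (by positivity), ← Real.rpow_add (by norm_num)]
          rfl
  rw [ENNReal.ofReal_le_ofReal_iff (by positivity),
    Real.rpow_le_rpow_left_iff (by norm_num)] at key
  linarith

lemma exists_cov {X Y : Type*} [Fintype X] [Nonempty Y] (W : X → Y → ℝ≥0∞)
    (v : ℝ≥0∞) (h : ∀ P : X → ℝ≥0∞, IsDist P → ∃ y, v ≤ cov W P y)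
    (g : X → ℝ≥0∞) (hg : ∑ x, g x ≠ ⊤) : ∃ y, v * ∑ x, g x ≤ cov W g y := by
  by_cases h0 : ∑ x, g x = 0
  · exact ⟨Classical.arbitrary Y, by simp [h0]⟩
  obtain ⟨y, hy⟩ := h (fun x => g x * (∑ x, g x)⁻¹) (by
    rw [IsDist, ← Finset.sum_mul, ENNReal.mul_inv_cancel h0 hg])
  refine ⟨y, ?_⟩
  have : cov W (fun x => g x * (∑ x, g x)⁻¹) y = cov W g y * (∑ x, g x)⁻¹ := by
    simp only [cov, Finset.sum_mul, ite_mul, zero_mul]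
  rw [this] at hy
  calc v * ∑ x, g x ≤ cov W g y * (∑ x, g x)⁻¹ * ∑ x, g x := by gcongr
    _ = cov W g y := by rw [mul_assoc, ENNReal.inv_mul_cancel h0 hg, mul_one]

lemma exists_cov_prod {X Y : Type*} [Fintype X] [Fintype Y] [Nonempty Y] (W : X → Y → ℝ≥0∞)
    (v : ℝ≥0∞) (h : ∀ P : X → ℝ≥0∞, IsDist P → ∃ y, v ≤ cov W P y) (n : ℕ) :
    ∀ (g : (Fin n → X) → ℝ≥0∞), ∑ x, g x ≠ ⊤ →
      ∃ y, v ^ n * ∑ x, g x ≤ cov (prodCh n W) g y := by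
  induction n with
  | zero =>
    intro g hg
    refine ⟨fun i => i.elim0, ?_⟩
    simp [cov, prodCh]
  | succ n ih =>
    intro g hg
    have hsum : ∀ f : (Fin (n + 1) → X) → ℝ≥0∞,
        ∑ x, f x = ∑ a, ∑ x : Fin n → X, f (Fin.cons a x) := by
      intro f
      rw [← (Fin.consEquiv (fun _ => X)).sum_comp, Fintype.sum_prod_type]
      rfl
    rw [hsum] at hg
    obtain ⟨b, hb⟩ := exists_cov W v h (fun a => ∑ x : Fin n → X, g (Fin.cons a x)) hg
    have hb2 : cov W (fun a => ∑ x : Fin n → X, g (Fin.cons a x)) b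
        = ∑ x : Fin n → X, ∑ a, if W a b ≠ 0 then g (Fin.cons a x) else 0 := by
      rw [cov, Finset.sum_comm]
      refine Finset.sum_congr rfl fun a _ => ?_
      split_ifs <;> simp
    rw [hb2] at hb
    obtain ⟨y, hy⟩ := ih (fun x => ∑ a, if W a b ≠ 0 then g (Fin.cons a x) else 0) (by
      refine ne_top_of_le_ne_top hg ?_
      rw [Finset.sum_comm]
      refine Finset.sum_le_sum fun a _ => Finset.sum_le_sum fun x _ => ?_
      split_ifs <;> simp)
    refine ⟨Fin.cons b y, ?_⟩
    rw [hsum]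
    calc v ^ (n + 1) * ∑ a, ∑ x : Fin n → X, g (Fin.cons a x)
        = v ^ n * (v * ∑ a, ∑ x : Fin n → X, g (Fin.cons a x)) := by ring
      _ ≤ v ^ n * _ := by gcongr
      _ ≤ _ := hy
      _ = cov (prodCh (n + 1) W) g (Fin.cons b y) := by
        rw [cov, cov, hsum, Finset.sum_comm]
        refine Finset.sum_congr rfl fun x _ => ?_
        have : ∀ a, prodCh (n + 1) W (Fin.cons a x) (Fin.cons b y) = W a b * prodCh n W x y := by
          intro a
          simp [prodCh, Fin.prod_univ_succ]
        simp only [this]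
        by_cases h0 : prodCh n W x y = 0
        · simp [h0]
        · simp [h0]

lemma greedy {A B : Type*} [Fintype A] (R : A → B → Prop) (v : ℝ) (hv1 : v ≤ 1)
    (h : ∀ T : Finset A, ∃ b, v * (T.card : ℝ) ≤ ((T.filter fun a => R a b).card : ℝ)) (M : ℕ) :
    ∃ f : Fin M → B, ((Finset.univ.filter fun a => ∀ j, ¬ R a (f j)).card : ℝ)
      ≤ (1 - v) ^ M * Fintype.card A := by
  induction M with
  | zero => exact ⟨fun i => i.elim0, by simp⟩
  | succ M ih =>
    obtain ⟨f, hf⟩ := ih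
    obtain ⟨b, hb⟩ := h (Finset.univ.filter fun a => ∀ j, ¬ R a (f j))
    refine ⟨Fin.cons b f, ?_⟩
    set T := Finset.univ.filter fun a => ∀ j, ¬ R a (f j) with hT
    have h1 : (Finset.univ.filter fun a => ∀ j, ¬ R a ((Fin.cons b f : Fin (M + 1) → B) j))
        = T.filter fun a => ¬ R a b := by
      ext a
      simp [hT, Fin.forall_fin_succ, and_comm]
    rw [h1]
    have h2 := T.card_filter_add_card_filter_not (fun a => R a b)
    have h3 : ((T.filter fun a => R a b).card : ℝ) + ((T.filter fun a => ¬ R a b).card : ℝ)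
      = T.card := by exact_mod_cast h2
    have h4 : (1 - v) * (T.card : ℝ) ≤ (1 - v) * ((1 - v) ^ M * Fintype.card A) :=
      mul_le_mul_of_nonneg_left hf (by linarith)
    calc ((T.filter fun a => ¬ R a b).card : ℝ) ≤ (1 - v) * T.card := by linarith
      _ ≤ _ := h4
      _ = _ := by ring

/-- A covering code gives a simulation with vanishing order-0 divergence. -/
lemma simD_le_zero {A B : Type*} [Fintype A] [Fintype B] (V : A → B → ℝ≥0∞) (c : ℝ) (M : ℕ)
    (hM : 0 < M) (hc : Real.logb 2 M ≤ c) (f : Fin M → B) (hf : ∀ a, ∃ j, V a (f j) ≠ 0) :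
    simD 0 V c ≤ 0 := by
  choose e he using hf
  let N : A → B → ℝ≥0∞ := fun a b => if b = f (e a) then 1 else 0
  have hN : IsSimulation c N := by
    refine ⟨1, M, fun _ => 1, fun a _ j => if j = e a then 1 else 0,
      fun j _ b => if b = f j then 1 else 0, hM, hc, by simp, by simp, by simp, ?_⟩
    intro a b
    rw [Fin.sum_univ_one, Finset.sum_eq_single (e a)]
    · simp [N]
    · intro j _ hj
      simp [hj]
    · simp
  refine (iInf_le _ ⟨N, hN⟩).trans (iSup_le fun a => ?_)
  simp only [renyiD, if_true]
  have := (neg_elog2_le_iff (∑ x ∈ Finset.univ.filter fun x => V a x ≠ 0, N a x) 0).2 (by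
    refine le_trans ?_ (Finset.single_le_sum (f := N a) (fun _ _ => zero_le)
      (Finset.mem_filter.2 ⟨Finset.mem_univ (f (e a)), he a⟩))
    simp [N])
  exact_mod_cast this

/-- Uniform output costs nothing and has finite order-0 divergence. -/
lemma simD_zero_le {A B : Type*} [Fintype A] [Fintype B] [Nonempty B] (V : A → B → ℝ≥0∞)
    (hV : ∀ a, ∃ b, V a b ≠ 0) (d : ℝ) (hd : (Fintype.card B : ℝ) ≤ (2 : ℝ) ^ d) :
    simD 0 V 0 ≤ (d : EReal) := by
  let N : A → B → ℝ≥0∞ := fun a b => (Fintype.card B : ℝ≥0∞)⁻¹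
  have hs : ∑ _b : B, (Fintype.card B : ℝ≥0∞)⁻¹ = 1 := by
    simp only [Finset.sum_const, Finset.card_univ, nsmul_eq_mul]
    exact ENNReal.mul_inv_cancel (by simp) (by simp)
  have hN : IsSimulation 0 N := by
    refine ⟨1, 1, fun _ => 1, fun a _ j => 1,
      fun j _ b => (Fintype.card B : ℝ≥0∞)⁻¹, by simp, by simp, by simp, by simp,
      fun _ _ => hs, ?_⟩
    intro a b
    simp [N]
  refine (iInf_le _ ⟨N, hN⟩).trans (iSup_le fun a => ?_)
  simp only [renyiD, if_true]
  rw [neg_elog2_le_iff]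
  obtain ⟨b, hb⟩ := hV a
  refine le_trans ?_ (Finset.single_le_sum (f := N a) (fun _ _ => zero_le)
    (Finset.mem_filter.2 ⟨Finset.mem_univ b, hb⟩))
  simp only [N]
  rw [Real.rpow_neg (by norm_num), ENNReal.ofReal_inv_of_pos (by positivity),
    ENNReal.inv_le_inv, ← ENNReal.ofReal_natCast]
  exact ENNReal.ofReal_le_ofReal hd


lemma achievability {X Y : Type*} [Fintype X] [Fintype Y] [Nonempty X] [Nonempty Y]
    (W : X → Y → ℝ≥0∞) (hW : IsChannel W) (r : ℝ) (h : renyiCap 0 W < (r : EReal)) :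
    0 ≤ r ∧ ∀ᶠ n : ℕ in atTop, simD 0 (prodCh n W) (r * n) ≤ 0 := by
  obtain ⟨r', h1, h2⟩ := EReal.lt_iff_exists_real_btwn.1 h
  rw [EReal.coe_lt_coe_iff] at h2
  have hcov := cov_of_cap_lt W hW r' h1
  set v : ℝ := (2 : ℝ) ^ (-r') with hv
  have hvpos : 0 < v := by positivity
  have hv1 : v ≤ 1 := by
    let x0 : X := Classical.arbitrary X
    have hd : IsDist (fun z : X => if z = x0 then (1 : ℝ≥0∞) else 0) := by
      simp [IsDist]
    obtain ⟨y, hy⟩ := hcov _ hd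
    have : cov W (fun z : X => if z = x0 then (1 : ℝ≥0∞) else 0) y ≤ 1 := by
      refine le_trans ?_ (le_of_eq hd)
      refine Finset.sum_le_sum fun x _ => ?_
      by_cases hx : W x y ≠ 0
      · rw [if_pos hx]
      · rw [if_neg hx]; exact zero_le
    have h3 := hy.trans this
    exact ENNReal.ofReal_le_one.1 h3
  have hr' : 0 ≤ r' := by
    by_contra! hneg
    have : 1 < v := Real.one_lt_rpow (by norm_num) (by linarith)
    linarith
  have hr : 0 < r := by linarith
  refine ⟨hr.le, ?_⟩
  set b : ℝ := (2 : ℝ) ^ (r - r') with hb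
  have hb1 : 1 < b := Real.one_lt_rpow (by norm_num) (by linarith)
  set L : ℝ := Real.log (Fintype.card X) with hL
  have hXpos : (0 : ℝ) < Fintype.card X := by exact_mod_cast Fintype.card_pos
  have hL0 : 0 ≤ L := Real.log_natCast_nonneg _
  have hlim := tendsto_pow_const_div_const_pow_of_one_lt 1 hb1
  have hev := hlim.eventually (gt_mem_nhds (show (0 : ℝ) < 1 / (2 * (L + 1)) by positivity))
  filter_upwards [hev] with n hn
  have hbn : 0 < b ^ n := by positivity
  have hn2 : n * L < b ^ n / 2 := by
    rw [pow_one, div_lt_div_iff₀ hbn (by positivity)] at hn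
    have : (0 : ℝ) ≤ n := Nat.cast_nonneg n
    nlinarith
  set x : ℝ := (2 : ℝ) ^ (r * n) with hx
  have hx1 : 1 ≤ x := Real.one_le_rpow (by norm_num) (by positivity)
  set M : ℕ := ⌊x⌋₊ with hM
  have hM1 : 1 ≤ M := Nat.one_le_floor_iff _ |>.2 hx1
  have hM1' : (1 : ℝ) ≤ M := by exact_mod_cast hM1
  have hMx : (M : ℝ) ≤ x := Nat.floor_le (by linarith)
  have hMx2 : x / 2 < M := by
    have := Nat.lt_floor_add_one x
    rw [← hM] at this
    linarith
  have hvb : v ^ n * x = b ^ n := by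
    rw [hx, Real.rpow_mul_natCast (by norm_num), ← mul_pow, hv,
      ← Real.rpow_add (by norm_num), hb]
    congr 2
    ring
  have hvM : n * L < v ^ n * M := by
    have : v ^ n * (x / 2) < v ^ n * M := mul_lt_mul_of_pos_left hMx2 (by positivity)
    have : v ^ n * (x / 2) = b ^ n / 2 := by rw [← hvb]; ring
    linarith
  have hvn1 : v ^ n ≤ 1 := pow_le_one₀ hvpos.le hv1
  obtain ⟨f, hf⟩ := greedy (fun a c => prodCh n W a c ≠ 0) (v ^ n) hvn1 (by
    intro T
    obtain ⟨y, hy⟩ := exists_cov_prod W _ hcov n (fun a => if a ∈ T then 1 else 0) (by simp)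
    refine ⟨y, ?_⟩
    have e1 : cov (prodCh n W) (fun a => if a ∈ T then 1 else 0) y
        = ((T.filter fun a => prodCh n W a y ≠ 0).card : ℝ≥0∞) := by
      rw [cov, ← Finset.sum_filter, Finset.sum_ite_mem, Finset.sum_const, nsmul_eq_mul, mul_one]
      congr 2
      ext a
      simp [and_comm]
    have e2 : ∑ a : Fin n → X, (if a ∈ T then (1 : ℝ≥0∞) else 0) = (T.card : ℝ≥0∞) := by
      simp
    rw [e1, e2] at hy
    have := ENNReal.toReal_mono (by simp) hy
    rw [ENNReal.toReal_mul, ENNReal.toReal_pow, ENNReal.toReal_ofReal hvpos.le] at this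
    simpa using this) M
  have hlt : (1 - v ^ n) ^ M * (Fintype.card (Fin n → X) : ℝ) < 1 := by
    have c1 : (1 - v ^ n) ^ M ≤ Real.exp (-(v ^ n * M)) := by
      calc (1 - v ^ n) ^ M ≤ (Real.exp (-(v ^ n))) ^ M :=
            pow_le_pow_left₀ (by linarith) (Real.one_sub_le_exp_neg _) M
        _ = _ := by rw [← Real.exp_nat_mul]; congr 1; ring
    have c2 : (Fintype.card (Fin n → X) : ℝ) = Real.exp (n * L) := by
      rw [Real.exp_nat_mul, hL, Real.exp_log hXpos]
      simp
    rw [c2]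
    calc _ ≤ Real.exp (-(v ^ n * M)) * Real.exp (n * L) := by gcongr
      _ = Real.exp (n * L - v ^ n * M) := by rw [← Real.exp_add]; congr 1; ring
      _ < 1 := by rw [Real.exp_lt_one_iff]; linarith
  have hcard := lt_of_le_of_lt hf hlt
  have hcard0 : (Finset.univ.filter fun a => ∀ j, ¬ prodCh n W a (f j) ≠ 0).card = 0 := by
    have : (Finset.univ.filter fun a => ∀ j, ¬ prodCh n W a (f j) ≠ 0).card < 1 := by
      exact_mod_cast hcard
    omega
  refine simD_le_zero _ _ M hM1 ?_ f fun a => ?_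
  · rw [Real.logb_le_iff_le_rpow (by norm_num) (by linarith)]
    exact hMx
  · by_contra! hcon
    have : a ∈ (Finset.univ.filter fun a => ∀ j, ¬ prodCh n W a (f j) ≠ 0) := by
      simp [hcon]
    rw [Finset.card_eq_zero.1 hcard0] at this
    simp at this

/-- **Reliability function at order `α = 0`** (Theorem 2, case `α = 0`):
`E_rf^{(0)}(W,r) = ∞` for every `r > I_0(W)`, and `E_rf^{(0)}(W,r) = 0` for every
`0 ≤ r < I_0(W)`. -/
theorem reliability_function_order_zero
    {X Y : Type*} [Fintype X] [Fintype Y] [Nonempty X] [Nonempty Y]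
    (W : X → Y → ℝ≥0∞) (hW : IsChannel W) :
    (∀ r : ℝ, renyiCap 0 W < (r : EReal) → Erf 0 W r = ⊤) ∧
    (∀ r : ℝ, 0 ≤ r → (r : EReal) < renyiCap 0 W → Erf 0 W r = 0) := by
  have hneg : ∀ n : ℕ, 1 ≤ n → (-1 : ℝ) / n < 0 := fun n hn =>
    div_neg_of_neg_of_pos (by norm_num) (by exact_mod_cast hn)
  constructor
  · intro r hr
    obtain ⟨hr0, hev⟩ := achievability W hW r hr
    have hrate : RateOK r (fun n => r * n) := by
      refine ⟨fun n => by positivity, Filter.limsup_le_of_le (by isBoundedDefault) ?_⟩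
      refine Filter.Eventually.of_forall fun n => ?_
      rw [EReal.coe_le_coe_iff]
      exact div_le_of_le_mul₀ (Nat.cast_nonneg n) hr0 le_rfl
    refine top_le_iff.1 (le_trans ?_ (le_iSup _ ⟨_, hrate⟩))
    refine Filter.le_liminf_of_le (by isBoundedDefault) ?_
    filter_upwards [hev, eventually_ge_atTop 1] with n hn h1
    have : eLog2 (simD 0 (prodCh n W) (r * n)) = ⊥ := by
      unfold eLog2
      rw [if_neg (ne_top_of_le_ne_top (by simp) hn), if_pos hn]
    simp only [this]
    rw [EReal.coe_mul_bot_of_neg (hneg n h1)]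
  · intro r hr0 hr
    apply le_antisymm
    · refine iSup_le fun ⟨c, hc0, hc⟩ => ?_
      obtain ⟨r2, h1, h2⟩ := EReal.lt_iff_exists_real_btwn.1 hr
      obtain ⟨r1, h3, h4⟩ := EReal.lt_iff_exists_real_btwn.1 h1
      rw [EReal.coe_lt_coe_iff] at h4
      obtain ⟨P, hP, hcov⟩ := cov_of_lt_cap W hW r2 h2
      have hev := Filter.eventually_lt_of_limsup_lt (lt_of_le_of_lt hc h3)
      refine le_trans Filter.liminf_le_limsup (Filter.limsup_le_of_le (by isBoundedDefault) ?_)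
      obtain ⟨n0, hn0⟩ := exists_nat_ge (1 / (r2 - r1))
      filter_upwards [hev, eventually_ge_atTop 1, eventually_ge_atTop n0] with n hn hn1 hn2
      have hnpos : (0 : ℝ) < n := by exact_mod_cast hn1
      rw [EReal.coe_lt_coe_iff, div_lt_iff₀ hnpos] at hn
      have hconv := converse (prodCh n W) (prodDist n P) (isDist_prod n P hP) (r2 * n) (c n) (by
        intro y
        rw [cov_prod]
        calc ∏ i, cov W P (y i) ≤ ∏ _i : Fin n, ENNReal.ofReal ((2 : ℝ) ^ (-r2)) :=
              Finset.prod_le_prod' fun i _ => hcov _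
          _ = _ := by
            rw [Finset.prod_const, Finset.card_univ, Fintype.card_fin,
              ← ENNReal.ofReal_pow (by positivity), ← Real.rpow_mul_natCast (by norm_num),
              neg_mul])
      have hone : (1 : EReal) ≤ simD 0 (prodCh n W) (c n) := by
        refine le_trans ?_ hconv
        have h5 : (1 : ℝ) ≤ r2 * n - c n := by
          have : 1 / (r2 - r1) ≤ n := hn0.trans (by exact_mod_cast hn2)
          rw [div_le_iff₀ (by linarith)] at this
          linarith
        exact_mod_cast h5
      have := neg_mul_le _ 0 (hneg n hn1) _ (by simpa using le_eLog2_one _ hone)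
      simpa using this
    · have hrate : RateOK r (fun _ => 0) := by
        refine ⟨fun n => le_rfl, Filter.limsup_le_of_le (by isBoundedDefault) ?_⟩
        refine Filter.Eventually.of_forall fun n => ?_
        rw [EReal.coe_le_coe_iff]
        simpa using hr0
      refine le_trans ?_ (le_iSup _ ⟨_, hrate⟩)
      have hYpos : (0 : ℝ) < Fintype.card Y := by exact_mod_cast Fintype.card_pos
      set C : ℝ := Real.logb 2 (Fintype.card Y) + 1 with hC
      have hCpos : 0 < C := by
        have : 0 ≤ Real.logb 2 (Fintype.card Y) :=
          Real.logb_nonneg (by norm_num) (by exact_mod_cast Fintype.card_pos)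
        linarith
      have hrow : ∀ x, ∃ y, W x y ≠ 0 := by
        intro x
        by_contra! hcon
        have := hW x
        simp [hcon] at this
      have hlim : Tendsto (fun n : ℕ => (((-1 : ℝ) / n * Real.logb 2 (n * C) : ℝ) : EReal))
          atTop (nhds ((0 : ℝ) : EReal)) := by
        refine (continuous_coe_real_ereal.tendsto 0).comp ?_
        have t1 : Tendsto (fun n : ℕ => (n : ℝ) * C) atTop atTop :=
          tendsto_natCast_atTop_atTop.atTop_mul_const hCpos
        have t2 : Tendsto (fun x : ℝ => Real.log x / x) atTop (nhds 0) :=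
          Real.isLittleO_log_id_atTop.tendsto_div_nhds_zero
        have t3 := (t2.comp t1).const_mul (-(C / Real.log 2))
        rw [mul_zero] at t3
        refine t3.congr' ?_
        filter_upwards [eventually_ge_atTop 1] with n hn
        have hnpos : (0 : ℝ) < n := by exact_mod_cast hn
        have hl : Real.log 2 ≠ 0 := (Real.log_pos (by norm_num)).ne'
        simp only [Function.comp, Real.logb]
        field_simp
      have h0 := hlim.liminf_eq
      rw [EReal.coe_zero] at h0
      rw [← h0]
      refine Filter.liminf_le_liminf ?_
      filter_upwards [eventually_ge_atTop 1] with n hn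
      have hnpos : (0 : ℝ) < n := by exact_mod_cast hn
      refine le_neg_mul _ _ (hneg n hn) _ (eLog2_le _ _ ?_)
      refine simD_zero_le _ (fun x => ?_) _ ?_
      · choose f hf using hrow
        exact ⟨fun i => f (x i), (prodCh_ne_zero _ _ _ _).2 fun i => hf _⟩
      · rw [mul_comm, Real.rpow_mul_natCast (by norm_num), Fintype.card_fun, Fintype.card_fin,
          Nat.cast_pow]
        refine pow_le_pow_left₀ hYpos.le ?_ n
        calc (Fintype.card Y : ℝ) = (2 : ℝ) ^ Real.logb 2 (Fintype.card Y) :=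
              (Real.rpow_logb (by norm_num) (by norm_num) hYpos).symm
          _ ≤ _ := Real.rpow_le_rpow_of_exponent_le (by norm_num) (by linarith)

end RST
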